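/- Let σ be a relational first-order language and let M be a countable σ-structure. Then M is MM-homogeneous if and only if M has the MM-extension property (MMEP). -/

import Mathlib

open FirstOrder Language Structure

universe u v w

/-- `M` is MM-homogeneous: every monomorphism (injective homomorphism) between finite
substructures of `M` extends to an injective endomorphism of `M`. -/
def IsMMHomogeneous (L : FirstOrder.Language.{u, v}) (M : Type w) [L.Structure M] : Prop :=
  ∀ (A B : L.Substructure M), (A : Set M).Finite → (B : Set M).Finite →
    ∀ f : A →[L] B, Function.Injective f →
      ∃ g : M →[L] M, Function.Injective g ∧ ∀ a : A, g (a : M) = (f a : M)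

/-- `M` has the MM-extension property: for every finite structure `B` in the age of `M`,
every substructure `A` of `B`, and every monomorphism `f : A → M`, there is a
monomorphism `g : B → M` restricting to `f` on `A`. -/
def HasMMEP (L : FirstOrder.Language.{u, v}) (M : Type w) [L.Structure M] : Prop :=
  ∀ (B : Type w) [L.Structure B], Finite B → Nonempty (B ↪[L] M) →
    ∀ (A : L.Substructure B) (f : A →[L] M), Function.Injective f →
      ∃ g : B →[L] M, Function.Injective g ∧ ∀ a : A, g (a : B) = f a

/-!
Transporting finite structures along embeddings into `M`, the two properties become the same
extension problem, except that MM-homogeneity asks for an extension to all of `M` and the MMEP only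
for an extension to a finite structure. Restricting an endomorphism gives one direction. Conversely,
as finite sets generate finite substructures, the MMEP makes the finite partial monomorphisms of `M`
with a given point in their domain cofinal among all finite ones. So when `M` is countable the
Rasiowa–Sikorski lemma yields a directed family of them whose domains cover `M`, and its union is
the required endomorphism.
-/

open Function Order Substructure

universe w'

section Embeddings

variable {L : FirstOrder.Language.{u, v}} {M : Type w} [L.Structure M]

theorem IsMMHomogeneous.exists_extension_along (hM : IsMMHomogeneous L M) {A : Type w'}
    [L.Structure A] [Finite A] (e : A ↪[L] M) (f : A →[L] M) (hf : Injective f) :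
    ∃ g : M →[L] M, Injective g ∧ ∀ a, g (e a) = f a := by
  let f' : e.toHom.range →[L] f.range :=
    (f.codRestrict f.range f.mem_range_self).comp e.equivRange.symm.toHom
  have hf' : Injective f' :=
    (hf.codRestrict f.mem_range_self).comp e.equivRange.symm.injective
  obtain ⟨g, hg, hgf⟩ := hM _ _ (Set.finite_range e) (Set.finite_range f) f' hf'
  refine ⟨g, hg, fun a ↦ ?_⟩
  calc g (e a) = f (e.equivRange.symm (e.equivRange a)) := hgf (e.equivRange a)
    _ = f a := by rw [Language.Equiv.symm_apply_apply]

theorem HasMMEP.exists_extension_along (hM : HasMMEP L M) {A : Type w'} [L.Structure A]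
    {B : Type w} [L.Structure B] [Finite B] (e : B ↪[L] M) (i : A ↪[L] B) (f : A →[L] M)
    (hf : Injective f) :
    ∃ g : B →[L] M, Injective g ∧ ∀ a, g (i a) = f a := by
  obtain ⟨g, hg, hgf⟩ := hM B inferInstance ⟨e⟩ i.toHom.range (f.comp i.equivRange.symm.toHom)
    (hf.comp i.equivRange.symm.injective)
  refine ⟨g, hg, fun a ↦ ?_⟩
  calc g (i a) = f (i.equivRange.symm (i.equivRange a)) := hgf (i.equivRange a)
    _ = f a := by rw [Language.Equiv.symm_apply_apply]

theorem IsMMHomogeneous.hasMMEP (hM : IsMMHomogeneous L M) : HasMMEP L M := by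
  rintro B _ hB ⟨e⟩ A f hf
  obtain ⟨g, hg, hgf⟩ := hM.exists_extension_along (e.comp A.subtype) f hf
  exact ⟨g.comp e.toHom, hg.comp e.injective, hgf⟩

end Embeddings

/-- A partial monomorphism from `M` to `N`: an injective homomorphism into `N` from a substructure
of `M`. Partial monomorphisms are ordered by extension. -/
structure PartialMono (L : FirstOrder.Language.{u, v}) (M : Type w) (N : Type w')
    [L.Structure M] [L.Structure N] where
  dom : L.Substructure M
  toHom : dom →[L] N
  injective : Injective toHom

namespace PartialMono

variable {L : FirstOrder.Language.{u, v}} {M : Type w} {N : Type w'}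
  [L.Structure M] [L.Structure N]

instance : Preorder (PartialMono L M N) where
  le p q := p.dom ≤ q.dom ∧
    ∀ x (hp : x ∈ p.dom) (hq : x ∈ q.dom), q.toHom ⟨x, hq⟩ = p.toHom ⟨x, hp⟩
  le_refl _ := ⟨le_rfl, fun _ _ _ ↦ rfl⟩
  le_trans _ _ _ hpq hqr := ⟨hpq.1.trans hqr.1, fun x hp hr ↦
    (hqr.2 x (hpq.1 hp) hr).trans (hpq.2 x hp (hpq.1 hp))⟩

theorem toHom_eq_of_directed {ι : Type*} {p : ι → PartialMono L M N} (hp : Directed (· ≤ ·) p)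
    (i j : ι) (x : M) (hi : x ∈ (p i).dom) (hj : x ∈ (p j).dom) :
    (p i).toHom ⟨x, hi⟩ = (p j).toHom ⟨x, hj⟩ := by
  obtain ⟨k, hik, hjk⟩ := hp i j
  exact (hik.2 x hi (hik.1 hi)).symm.trans (hjk.2 x hj (hik.1 hi))

theorem exists_mem_dom_of_directed {ι α : Type*} [Nonempty ι] [Finite α]
    {p : ι → PartialMono L M N} (hp : Directed (· ≤ ·) p) (hcover : ∀ x, ∃ i, x ∈ (p i).dom)
    (x : α → M) : ∃ k, ∀ a, x a ∈ (p k).dom := by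
  choose i hi using fun a ↦ hcover (x a)
  obtain ⟨k, hk⟩ := hp.finite_le i
  exact ⟨k, fun a ↦ (hk a).1 (hi a)⟩

theorem exists_extension_of_directed {ι : Type*} [Nonempty ι] {p : ι → PartialMono L M N}
    (hp : Directed (· ≤ ·) p) (hcover : ∀ x, ∃ i, x ∈ (p i).dom) :
    ∃ g : M →[L] N, Injective g ∧ ∀ i (x : (p i).dom), g x = (p i).toHom x := by
  have hUnion : ⋃ i, ((p i).dom : Set M) = Set.univ := by simpa [Set.iUnion_eq_univ_iff]
  let g : M → N := Set.liftCover (fun i ↦ ((p i).dom : Set M)) (fun i ↦ (p i).toHom)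
    (toHom_eq_of_directed hp) hUnion
  have hg (i : ι) (x : (p i).dom) : g x = (p i).toHom x  :=
    Set.liftCover_of_mem (i := i) x.2
  have hg_comp {n : ℕ} (i : ι) (x : Fin n → (p i).dom) :
      g ∘ ((↑) : (p i).dom → M) ∘ x = (p i).toHom ∘ x := funext fun a ↦ hg i (x a)
  refine ⟨⟨g, fun {n} F x ↦ ?_, fun {n} R x hR ↦ ?_⟩, fun x y hxy ↦ ?_, hg⟩
  · obtain ⟨k, hk⟩ := exists_mem_dom_of_directed hp hcover x
    lift x to Fin n → (p k).dom using hk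
    calc g (funMap F ((↑) ∘ x)) = (p k).toHom (funMap F x) := hg k (funMap F x)
      _ = funMap F ((p k).toHom ∘ x) := (p k).toHom.map_fun F x
      _ = funMap F (g ∘ (↑) ∘ x) := by rw [hg_comp]
  · obtain ⟨k, hk⟩ := exists_mem_dom_of_directed hp hcover x
    lift x to Fin n → (p k).dom using hk
    exact hg_comp k x ▸ (p k).toHom.map_rel R x hR
  · obtain ⟨k, hk⟩ := exists_mem_dom_of_directed hp hcover ![x, y]
    have hx : x ∈ (p k).dom := hk 0
    have hy : y ∈ (p k).dom := hk 1
    have : (p k).toHom ⟨x, hx⟩ = (p k).toHom ⟨y, hy⟩ :=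
      (hg k ⟨x, hx⟩).symm.trans (hxy.trans (hg k ⟨y, hy⟩))
    exact congrArg Subtype.val ((p k).injective this)

theorem exists_extension_of_forall_exists_le [Countable M] {S : Set (PartialMono L M N)}
    (hS : ∀ p ∈ S, ∀ m : M, ∃ q ∈ S, p ≤ q ∧ m ∈ q.dom) {p : PartialMono L M N} (hp : p ∈ S) :
    ∃ g : M →[L] N, Injective g ∧ ∀ x : p.dom, g x = p.toHom x := by
  have := Encodable.ofCountable M
  let definedAt (m : M) : Cofinal S :=
    { carrier := {q | m ∈ q.1.dom}
      isCofinal := fun q ↦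
        let ⟨r, hr, hqr, hm⟩ := hS q q.2 m
        ⟨⟨r, hr⟩, hm, hqr⟩ }
  let I : Ideal S := idealOfCofinals ⟨p, hp⟩ definedAt
  have hI : Directed (· ≤ ·) fun q : I ↦ (q : S).1 := I.directed.directed_val
  have hcover (m : M) : ∃ q : I, m ∈ (q : S).1.dom :=
    let ⟨q, hm, hq⟩ := cofinal_meets_idealOfCofinals ⟨p, hp⟩ definedAt m
    ⟨⟨q, hq⟩, hm⟩
  have : Nonempty I := I.nonempty.to_subtype
  obtain ⟨g, hg, hgI⟩ := exists_extension_of_directed hI hcover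
  exact ⟨g, hg, hgI ⟨⟨p, hp⟩, mem_idealOfCofinals _ _⟩⟩

end PartialMono

/-- A structure is locally finite if all its finitely generated substructures are finite, as holds
in a relational language; a finite partial monomorphism can then gain a point and stay finite. -/
def IsLocallyFinite (L : FirstOrder.Language.{u, v}) (M : Type w) [L.Structure M] : Prop :=
  ∀ S : L.Substructure M, S.FG → Finite S

section LocallyFinite

variable {L : FirstOrder.Language.{u, v}} {M : Type w} [L.Structure M]

theorem HasMMEP.exists_partialMono_ge_mem_dom (hM : HasMMEP L M) (hfin : IsLocallyFinite L M)
    (p : PartialMono L M M) (hp : Finite p.dom) (m : M) :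
    ∃ q : PartialMono L M M, Finite q.dom ∧ p ≤ q ∧ m ∈ q.dom := by
  let T : L.Substructure M := p.dom ⊔ closure L {m}
  have hT : Finite T := hfin T (FG.of_finite.sup (fg_closure_singleton m))
  obtain ⟨g, hg, hgp⟩ :=
    hM.exists_extension_along T.subtype (inclusion le_sup_left) p.toHom p.injective
  exact ⟨⟨T, g, hg⟩, hT, ⟨le_sup_left, fun x hx _ ↦ hgp ⟨x, hx⟩⟩,
    le_sup_right (a := p.dom) (subset_closure (Set.mem_singleton m))⟩

theorem HasMMEP.isMMHomogeneous [Countable M] (hM : HasMMEP L M) (hfin : IsLocallyFinite L M) :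
    IsMMHomogeneous L M := fun A B hA _ f hf ↦
  let p : PartialMono L M M := ⟨A, B.subtype.toHom.comp f, B.subtype.injective.comp hf⟩
  PartialMono.exists_extension_of_forall_exists_le (S := {q | Finite q.dom})
    (hM.exists_partialMono_ge_mem_dom hfin) (p := p) hA.to_subtype

end LocallyFinite

theorem mm_homogeneous_iff_mmep_general (L : FirstOrder.Language.{u, v}) (M : Type w)
    [L.Structure M] [Countable M] (hfin : IsLocallyFinite L M) :
    IsMMHomogeneous L M ↔ HasMMEP L M :=
  ⟨fun h ↦ h.hasMMEP, fun h ↦ h.isMMHomogeneous hfin⟩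

theorem mm_homogeneous_iff_mmep (L : FirstOrder.Language.{u, v}) [L.IsRelational]
    (M : Type w) [L.Structure M] [Countable M] :
    IsMMHomogeneous L M ↔ HasMMEP L M :=
  mm_homogeneous_iff_mmep_general L M fun _ hS ↦ hS.finite
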